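/- Exponential smallness of the difference of Weyl–Titchmarsh functions (relation (3.9)): Let a > 0, q ∈ L¹(0,a), α ∈ (0,π), and let φ, ψ, φ', ψ' be as in the context. Let γ and γ̂ be Nevanlinna functions, and define for non-real z: m(z) := (ψ'(a;z) − ψ(a;z)γ(z))/(φ'(a;z) − φ(a;z)γ(z)) and m̂(z) := (ψ'(a;z) − ψ(a;z)γ̂(z))/(φ'(a;z) − φ(a;z)γ̂(z)). Then for every θ ∈ (0,π)∪(π,2π) and every ε > 0 there exist C, R > 0 such that for all z = r·e^{iθ} with r ≥ R the denominators φ'(a;z) − φ(a;z)γ(z) and φ'(a;z) − φ(a;z)γ̂(z) are nonzero and |m(z) − m̂(z)| ≤ C·exp(−2a(1−ε)·Re√(−z)), where √(−z) is the principal square root (Re√(−z) > 0). -/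

import Mathlib

/-!
Write `-z = k ^ 2` with `0 ≤ re k`. Green's identity reads
`im (conj φ(a) * φ'(a)) = -im z * ∫₀ᵃ |φ|²`, so for every boundary value `g` in the closed
half-plane of `z` the product `|φ(a)| * |φ'(a) - φ(a) g|` is at least `|im z| * ∫₀ᵃ |φ|²`. As the
Wronskian `W` of `φ` and `ψ` is constant, any two quotients `(ψ'(a) - ψ(a) g) / (φ'(a) - φ(a) g)`
therefore differ by at most `2 |W| / (|im z| * ∫₀ᵃ |φ|²)`, which is Weyl's disc estimate. Variation
of constants shows `|φ(x)| ≥ c * exp (x * re k)` on `[a/2, a]` for large `|k|`, which gives the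
exponential rate; the factor `1 / re k` lost by integrating `exp (2 x re k)` is recovered from
`|im z| = 2 * re k * |im k|`. Hence the bound holds even with `ε = 0`, uniformly over boundary
values and over sectors `s * |z| ≤ |im z|`.
-/

open MeasureTheory Set

/-- `u` is, for each `z ∈ ℂ`, the continuous solution on `[0,a]` of the Volterra
integral equation `u(x;z) = c₀ + c₁·x + ∫₀ˣ (x-s)(q(s)-z) u(s;z) ds`. -/
def IsRegSolution (a : ℝ) (q : ℝ → ℝ) (c₀ c₁ : ℝ) (u : ℂ → ℝ → ℂ) : Prop :=
  (∀ z : ℂ, ContinuousOn (u z) (Icc 0 a)) ∧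
  ∀ z : ℂ, ∀ x ∈ Icc (0:ℝ) a,
    u z x = (c₀ : ℂ) + (x : ℂ) * (c₁ : ℂ) +
      ∫ s in (0:ℝ)..x, ((x : ℂ) - (s : ℂ)) * ((q s : ℂ) - z) * u z s

/-- A Nevanlinna function: holomorphic on `ℂ∖ℝ`, symmetric w.r.t. conjugation,
with nonnegative imaginary part on the upper half-plane. -/
def IsNevanlinna (γ : ℂ → ℂ) : Prop :=
  DifferentiableOn ℂ γ {z : ℂ | z.im ≠ 0} ∧
  (∀ z : ℂ, z.im ≠ 0 → γ (starRingEnd ℂ z) = starRingEnd ℂ (γ z)) ∧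
  (∀ z : ℂ, 0 < z.im → 0 ≤ (γ z).im)

section Primitive

variable {E E' : Type*} [NormedAddCommGroup E] [NormedSpace ℝ E]
  [NormedAddCommGroup E'] [NormedSpace ℝ E'] {a b : ℝ}

/-- `F` is an indefinite integral of the integrable function `f` on the interval with endpoints
`a` and `b`; equivalently, `F` is absolutely continuous there with a.e. derivative `f`. -/
structure IsPrimitiveOn (F f : ℝ → E) (a b : ℝ) : Prop where
  intervalIntegrable : IntervalIntegrable f volume a b
  eq_add_integral : ∀ x ∈ uIcc a b, F x = F a + ∫ s in a..x, f s

lemma isPrimitiveOn_integral {f : ℝ → E} (hf : IntervalIntegrable f volume a b) :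
    IsPrimitiveOn (fun x => ∫ s in a..x, f s) f a b :=
  ⟨hf, fun x _ => by simp⟩

namespace IsPrimitiveOn

variable {F G f g : ℝ → E}

lemma intervalIntegrable_left (h : IsPrimitiveOn F f a b) {x : ℝ} (hx : x ∈ uIcc a b) :
    IntervalIntegrable f volume a x :=
  h.intervalIntegrable.mono_set (uIcc_subset_uIcc_left hx)

lemma congr (h : IsPrimitiveOn F f a b) (hFG : ∀ x ∈ uIcc a b, G x = F x) (hfg : ∀ x, g x = f x) :
    IsPrimitiveOn G g a b := by
  rw [show g = f from funext hfg]
  exact ⟨h.intervalIntegrable, fun x hx => by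
    rw [hFG x hx, hFG a left_mem_uIcc, h.eq_add_integral x hx]⟩

lemma add (hF : IsPrimitiveOn F f a b) (hG : IsPrimitiveOn G g a b) :
    IsPrimitiveOn (fun x => F x + G x) (fun x => f x + g x) a b := by
  refine ⟨hF.intervalIntegrable.add hG.intervalIntegrable, fun x hx => ?_⟩
  rw [intervalIntegral.integral_add (hF.intervalIntegrable_left hx)
    (hG.intervalIntegrable_left hx), hF.eq_add_integral x hx, hG.eq_add_integral x hx]
  abel

lemma sub (hF : IsPrimitiveOn F f a b) (hG : IsPrimitiveOn G g a b) :
    IsPrimitiveOn (fun x => F x - G x) (fun x => f x - g x) a b := by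
  refine ⟨hF.intervalIntegrable.sub hG.intervalIntegrable, fun x hx => ?_⟩
  rw [intervalIntegral.integral_sub (hF.intervalIntegrable_left hx)
    (hG.intervalIntegrable_left hx), hF.eq_add_integral x hx, hG.eq_add_integral x hx]
  abel

lemma clm_comp [CompleteSpace E] [CompleteSpace E'] (L : E →L[ℝ] E')
    (hF : IsPrimitiveOn F f a b) : IsPrimitiveOn (fun x => L (F x)) (fun x => L (f x)) a b := by
  refine ⟨⟨L.integrable_comp hF.intervalIntegrable.1, L.integrable_comp hF.intervalIntegrable.2⟩,
    fun x hx => ?_⟩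
  rw [L.intervalIntegral_comp_comm (hF.intervalIntegrable_left hx), hF.eq_add_integral x hx,
    map_add]

lemma of_hasDerivAt [CompleteSpace E] (hF : ∀ x, HasDerivAt F (f x) x) (hf : Continuous f) :
    IsPrimitiveOn F f a b := by
  refine ⟨hf.intervalIntegrable a b, fun x _ => ?_⟩
  rw [intervalIntegral.integral_eq_sub_of_hasDerivAt (fun t _ => hF t)
    (hf.intervalIntegrable a x), add_sub_cancel]

lemma absolutelyContinuousOnInterval (h : IsPrimitiveOn F f a b) :
    AbsolutelyContinuousOnInterval F a b := by
  have hnorm := h.intervalIntegrable.norm.absolutelyContinuousOnInterval_intervalIntegral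
    (left_mem_uIcc : a ∈ uIcc a b)
  have hdist : ∀ x ∈ uIcc a b, ∀ y ∈ uIcc a b,
      dist (F x) (F y) ≤ dist (∫ s in a..x, ‖f s‖) (∫ s in a..y, ‖f s‖) := by
    intro x hx y hy
    have hfx := h.intervalIntegrable_left hx
    have hfy := h.intervalIntegrable_left hy
    rw [h.eq_add_integral x hx, h.eq_add_integral y hy, dist_add_left, dist_eq_norm,
      Real.dist_eq, intervalIntegral.integral_interval_sub_left hfx hfy,
      intervalIntegral.integral_interval_sub_left hfx.norm hfy.norm]
    exact intervalIntegral.norm_integral_le_abs_integral_norm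
  rw [absolutelyContinuousOnInterval_iff] at hnorm ⊢
  intro ε hε
  obtain ⟨δ, hδ, hsum⟩ := hnorm ε hε
  refine ⟨δ, hδ, fun I hI hIδ => lt_of_le_of_lt ?_ (hsum I hI hIδ)⟩
  exact Finset.sum_le_sum fun i hi => hdist _ (hI.1 i hi).1 _ (hI.1 i hi).2

lemma continuousOn (h : IsPrimitiveOn F f a b) : ContinuousOn F (uIcc a b) :=
  h.absolutelyContinuousOnInterval.continuousOn

lemma ae_hasDerivAt [CompleteSpace E] (h : IsPrimitiveOn F f a b) :
    ∀ᵐ x, x ∈ uIcc a b → HasDerivAt F (f x) x := by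
  filter_upwards [h.intervalIntegrable.ae_hasDerivAt_integral, volume.ae_ne a, volume.ae_ne b]
    with x hderiv hxa hxb hx
  have hnhds : uIcc a b ∈ nhds x := by
    refine Icc_mem_nhds (lt_of_le_of_ne hx.1 ?_) (lt_of_le_of_ne hx.2 ?_) <;> grind
  refine ((hderiv hx a left_mem_uIcc).const_add (F a)).congr_of_eventuallyEq ?_
  filter_upwards [hnhds] with y hy using h.eq_add_integral y hy

lemma of_ae_hasDerivAt [CompleteSpace E] (hF : AbsolutelyContinuousOnInterval F a b)
    (hf : IntervalIntegrable f volume a b) (hFf : ∀ᵐ x, x ∈ uIcc a b → HasDerivAt F (f x) x) :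
    IsPrimitiveOn F f a b := by
  have hI := isPrimitiveOn_integral hf
  obtain ⟨c, hc⟩ := (hF.fun_sub hI.absolutelyContinuousOnInterval).const_of_ae_hasDerivAt_zero (by
    filter_upwards [hFf, hI.ae_hasDerivAt] with x hFx hIx hx
    simpa only [sub_self] using (hFx hx).fun_sub (hIx hx))
  refine ⟨hf, fun x hx => ?_⟩
  have hca : F a = c := by simpa using hc a left_mem_uIcc
  rw [hca, ← hc x hx, sub_add_cancel]

lemma mul {𝕜 : Type*} [RCLike 𝕜] {F G f g : ℝ → 𝕜} (hF : IsPrimitiveOn F f a b)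
    (hG : IsPrimitiveOn G g a b) :
    IsPrimitiveOn (fun x => F x * G x) (fun x => f x * G x + F x * g x) a b := by
  refine of_ae_hasDerivAt
    (hF.absolutelyContinuousOnInterval.fun_smul hG.absolutelyContinuousOnInterval)
    ((hF.intervalIntegrable.mul_continuousOn hG.continuousOn).add
      (hG.intervalIntegrable.continuousOn_mul hF.continuousOn)) ?_
  filter_upwards [hF.ae_hasDerivAt, hG.ae_hasDerivAt] with x hFx hGx hx
  exact (hFx hx).mul (hGx hx)

end IsPrimitiveOn

lemma isPrimitiveOn_integral_sub_mul {g : ℝ → ℂ} (hg : IntervalIntegrable g volume 0 a) :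
    IsPrimitiveOn (fun x : ℝ => ∫ s in 0..x, ((x : ℂ) - s) * g s) (fun x => ∫ s in 0..x, g s)
      0 a := by
  have hid : IsPrimitiveOn (fun x : ℝ => (x : ℂ)) (fun _ => 1) 0 a :=
    .of_hasDerivAt (fun x => Complex.ofRealCLM.hasDerivAt) continuous_const
  have hsg : IntervalIntegrable (fun s : ℝ => (s : ℂ) * g s) volume 0 a :=
    hg.continuousOn_mul Complex.continuous_ofReal.continuousOn
  have hG := isPrimitiveOn_integral hg
  have hsG := isPrimitiveOn_integral hsg
  refine ((hid.mul hG).sub hsG).congr (fun x hx => ?_) (fun x => by ring)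
  simp only [sub_mul]
  rw [intervalIntegral.integral_sub ((hG.intervalIntegrable_left hx).const_mul _)
    (hsG.intervalIntegrable_left hx), intervalIntegral.integral_const_mul]

end Primitive

section Schrodinger

variable {a b : ℝ}

/-- `u` is a Carathéodory solution of `u'' = p u` on the interval with endpoints `a` and `b`.
The derivative `u'` is carried along explicitly, since `deriv u` is not controlled at the
endpoints. -/
structure IsSchrodingerSolution (p u u' : ℝ → ℂ) (a b : ℝ) : Prop where
  isPrimitiveOn : IsPrimitiveOn u u' a b
  isPrimitiveOn_deriv : IsPrimitiveOn u' (fun x => p x * u x) a b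

lemma IsRegSolution.isSchrodingerSolution (ha : 0 ≤ a) {q : ℝ → ℝ}
    (hq : IntegrableOn q (Icc 0 a)) {c₀ c₁ : ℝ} {u : ℂ → ℝ → ℂ} (hu : IsRegSolution a q c₀ c₁ u)
    (z : ℂ) :
    IsSchrodingerSolution (fun x => (q x : ℂ) - z) (u z)
      (fun x => c₁ + ∫ s in 0..x, ((q s : ℂ) - z) * u z s) 0 a := by
  have hp : IntervalIntegrable (fun s => (q s : ℂ) - z) volume 0 a :=
    .sub ((intervalIntegrable_iff_integrableOn_Icc_of_le ha).2 (Integrable.ofReal hq))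
      intervalIntegrable_const
  have hpu : IntervalIntegrable (fun s => ((q s : ℂ) - z) * u z s) volume 0 a :=
    hp.mul_continuousOn (by simpa only [uIcc_of_le ha] using hu.1 z)
  have hconst : IsPrimitiveOn (fun _ => (c₁ : ℂ)) (fun _ => 0) 0 a :=
    .of_hasDerivAt (fun x => hasDerivAt_const x _) continuous_const
  have haffine : IsPrimitiveOn (fun x : ℝ => (c₀ : ℂ) + x * c₁) (fun _ => c₁) 0 a :=
    .of_hasDerivAt (fun x => by
      simpa using (Complex.ofRealCLM.hasDerivAt.mul_const (c₁ : ℂ)).const_add (c₀ : ℂ))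
      continuous_const
  refine ⟨(haffine.add (isPrimitiveOn_integral_sub_mul hpu)).congr (fun x hx => ?_) fun _ => rfl,
    (hconst.add (isPrimitiveOn_integral hpu)).congr (fun _ _ => rfl) fun _ => by simp⟩
  rw [hu.2 z x (by rwa [uIcc_of_le ha] at hx)]
  simp only [mul_assoc]

namespace IsSchrodingerSolution

lemma wronskian_eq {p u u' v v' : ℝ → ℂ} (hu : IsSchrodingerSolution p u u' a b)
    (hv : IsSchrodingerSolution p v v' a b) :
    u b * v' b - u' b * v b = u a * v' a - u' a * v a := by
  have hW : IsPrimitiveOn (fun x => u x * v' x - u' x * v x) (fun _ => 0) a b :=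
    ((hu.isPrimitiveOn.mul hv.isPrimitiveOn_deriv).sub
      (hu.isPrimitiveOn_deriv.mul hv.isPrimitiveOn)).congr (fun _ _ => rfl) fun x => by ring
  simpa using hW.eq_add_integral b right_mem_uIcc

lemma im_conj_mul_deriv {q : ℝ → ℝ} {z : ℂ} {u u' : ℝ → ℂ}
    (hu : IsSchrodingerSolution (fun x => (q x : ℂ) - z) u u' a b) :
    (starRingEnd ℂ (u b) * u' b).im =
      (starRingEnd ℂ (u a) * u' a).im - z.im * ∫ s in a..b, ‖u s‖ ^ 2 := by
  have hderiv : IsPrimitiveOn (fun x => (starRingEnd ℂ (u x) * u' x).im)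
      (fun x => -z.im * ‖u x‖ ^ 2) a b := by
    refine (((hu.isPrimitiveOn.clm_comp Complex.conjCLE.toContinuousLinearMap).mul
      hu.isPrimitiveOn_deriv).clm_comp Complex.imCLM).congr (fun _ _ => rfl) fun x => ?_
    simp only [← Complex.normSq_eq_norm_sq, Complex.normSq_apply, ContinuousLinearEquiv.coe_coe,
      ContinuousAlgEquiv.coeCLE_apply, Complex.conjCAE_apply, Complex.imCLM_apply, Complex.add_im,
      Complex.mul_im, Complex.mul_re, Complex.sub_im, Complex.sub_re, Complex.conj_im,
      Complex.conj_re, Complex.ofReal_im, Complex.ofReal_re]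
    ring
  rw [hderiv.eq_add_integral b right_mem_uIcc, intervalIntegral.integral_const_mul]
  ring

lemma variation_of_constants {q u u' : ℝ → ℂ} {k : ℂ}
    (hu : IsSchrodingerSolution (fun x => q x + k ^ 2) u u' 0 a) {x : ℝ} (hx : x ∈ uIcc 0 a) :
    k * u x = k * u 0 * Complex.cosh (k * x) + u' 0 * Complex.sinh (k * x) +
      ∫ s in 0..x, Complex.sinh (k * (x - s)) * (q s * u s) := by
  have harg (s : ℂ) : HasDerivAt (fun s : ℂ => k * (x - s)) (-k) s := by
    simpa using ((hasDerivAt_id s).const_sub (x : ℂ)).const_mul k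
  have hcosh : IsPrimitiveOn (fun s : ℝ => k * Complex.cosh (k * (x - s)))
      (fun s => k * (Complex.sinh (k * (x - s)) * -k)) 0 a :=
    .of_hasDerivAt (fun s => ((harg s).ccosh.const_mul k).comp_ofReal) (by fun_prop)
  have hsinh : IsPrimitiveOn (fun s : ℝ => Complex.sinh (k * (x - s)))
      (fun s => Complex.cosh (k * (x - s)) * -k) 0 a :=
    .of_hasDerivAt (fun s => (harg s).csinh.comp_ofReal) (by fun_prop)
  have hsum : IsPrimitiveOn
      (fun s : ℝ => k * Complex.cosh (k * (x - s)) * u s + Complex.sinh (k * (x - s)) * u' s)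
      (fun s => Complex.sinh (k * (x - s)) * (q s * u s)) 0 a :=
    ((hcosh.mul hu.isPrimitiveOn).add (hsinh.mul hu.isPrimitiveOn_deriv)).congr
      (fun _ _ => rfl) fun s => by ring
  have hx0 := hsum.eq_add_integral x hx
  simp only [sub_self, mul_zero, Complex.cosh_zero, Complex.sinh_zero, mul_one, zero_mul,
    add_zero, Complex.ofReal_zero, sub_zero] at hx0
  linear_combination hx0

end IsSchrodingerSolution

end Schrodinger

section Growth

lemma norm_sinh_le_exp_abs_re (w : ℂ) : ‖Complex.sinh w‖ ≤ Real.exp |w.re| := by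
  have hadd := norm_sub_le (Complex.exp w) (Complex.exp (-w))
  rw [Complex.norm_exp, Complex.norm_exp, Complex.neg_re] at hadd
  have hpos := Real.exp_le_exp.2 (le_abs_self w.re)
  have hneg := Real.exp_le_exp.2 (neg_le_abs w.re)
  rw [Complex.sinh, norm_div, Complex.norm_ofNat]
  linarith

lemma norm_cosh_le_exp_abs_re (w : ℂ) : ‖Complex.cosh w‖ ≤ Real.exp |w.re| := by
  have hadd := norm_add_le (Complex.exp w) (Complex.exp (-w))
  rw [Complex.norm_exp, Complex.norm_exp, Complex.neg_re] at hadd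
  have hpos := Real.exp_le_exp.2 (le_abs_self w.re)
  have hneg := Real.exp_le_exp.2 (neg_le_abs w.re)
  rw [Complex.cosh, norm_div, Complex.norm_ofNat]
  linarith

lemma sinh_re_le_norm_cosh (w : ℂ) : Real.sinh w.re ≤ ‖Complex.cosh w‖ := by
  have hsub := norm_sub_norm_le (Complex.exp w) (-Complex.exp (-w))
  rw [norm_neg, sub_neg_eq_add, Complex.norm_exp, Complex.norm_exp, Complex.neg_re] at hsub
  rw [Complex.cosh, norm_div, Complex.norm_ofNat, Real.sinh_eq]
  linarith

lemma exp_div_four_le_sinh {y : ℝ} (hy : 1 / 2 ≤ y) : Real.exp y / 4 ≤ Real.sinh y := by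
  have htwo : 2 ≤ Real.exp (y + y) := by linarith [Real.add_one_le_exp (y + y)]
  have hinv : Real.exp (-y) * Real.exp (y + y) = Real.exp y := by
    rw [← Real.exp_add]
    ring_nf
  rw [Real.sinh_eq]
  nlinarith [Real.exp_pos (-y)]

variable {a M : ℝ} {k : ℂ} {q u u' : ℝ → ℂ}

lemma norm_integral_sinh_mul_le (hq : IntervalIntegrable q volume 0 a) (hk : 0 ≤ k.re)
    (hu : ∀ s ∈ Icc 0 a, ‖u s‖ ≤ M * Real.exp (k.re * s)) {x : ℝ} (hx : x ∈ Icc 0 a) :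
    ‖∫ s in 0..x, Complex.sinh (k * (x - s)) * (q s * u s)‖ ≤
      M * (∫ s in 0..a, ‖q s‖) * Real.exp (k.re * x) := by
  have hM : 0 ≤ M := by simpa using (norm_nonneg _).trans (hu 0 ⟨le_rfl, hx.1.trans hx.2⟩)
  have hqx : IntervalIntegrable q volume 0 x :=
    hq.mono_set (uIcc_subset_uIcc_left (Icc_subset_uIcc hx))
  have hpointwise : ∀ s ∈ Ioc 0 x, ‖Complex.sinh (k * (x - s)) * (q s * u s)‖ ≤
      M * Real.exp (k.re * x) * ‖q s‖ := by
    intro s hs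
    have hre : |(k * (x - s) : ℂ).re| = k.re * (x - s) := by
      rw [← Complex.ofReal_sub, Complex.re_mul_ofReal, abs_of_nonneg]
      exact mul_nonneg hk (sub_nonneg.2 hs.2)
    calc ‖Complex.sinh (k * (x - s)) * (q s * u s)‖
        ≤ Real.exp (k.re * (x - s)) * (‖q s‖ * (M * Real.exp (k.re * s))) := by
          rw [norm_mul, norm_mul]
          gcongr
          · exact hre ▸ norm_sinh_le_exp_abs_re _
          · exact hu s ⟨hs.1.le, hs.2.trans hx.2⟩
      _ = M * (Real.exp (k.re * (x - s)) * Real.exp (k.re * s)) * ‖q s‖ := by ring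
      _ = M * Real.exp (k.re * x) * ‖q s‖ := by rw [← Real.exp_add]; ring_nf
  calc ‖∫ s in 0..x, Complex.sinh (k * (x - s)) * (q s * u s)‖
      ≤ ∫ s in 0..x, M * Real.exp (k.re * x) * ‖q s‖ :=
        intervalIntegral.norm_integral_le_of_norm_le hx.1 (.of_forall hpointwise)
          (hqx.norm.const_mul _)
    _ ≤ M * Real.exp (k.re * x) * ∫ s in 0..a, ‖q s‖ := by
        rw [intervalIntegral.integral_const_mul]
        gcongr
        exact intervalIntegral.integral_mono_interval le_rfl hx.1 hx.2
          (.of_forall fun s => norm_nonneg _) hq.norm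
    _ = M * (∫ s in 0..a, ‖q s‖) * Real.exp (k.re * x) := by ring

namespace IsSchrodingerSolution

/-- Evaluating the variation of constants formula where `‖u x‖ * exp (-x * re k)` is maximal bounds
that maximum by the initial data plus at most half of itself. -/
lemma norm_le_mul_exp (hu : IsSchrodingerSolution (fun x => q x + k ^ 2) u u' 0 a)
    (hq : IntervalIntegrable q volume 0 a) (hk : 0 ≤ k.re) (hk1 : 1 ≤ ‖k‖)
    (hkq : 2 * ∫ s in 0..a, ‖q s‖ ≤ ‖k‖) {x : ℝ} (hx : x ∈ Icc 0 a) :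
    ‖u x‖ ≤ 2 * (‖u 0‖ + ‖u' 0‖) * Real.exp (k.re * x) := by
  have ha : 0 ≤ a := hx.1.trans hx.2
  have hcont : ContinuousOn (fun s => ‖u s‖ / Real.exp (k.re * s)) (Icc 0 a) := by
    have hu_cont := hu.isPrimitiveOn.continuousOn
    rw [uIcc_of_le ha] at hu_cont
    exact hu_cont.norm.div (by fun_prop) fun s _ => (Real.exp_pos _).ne'
  obtain ⟨x₀, hx₀, hmax⟩ := isCompact_Icc.exists_isMaxOn ⟨0, le_rfl, ha⟩ hcont
  obtain ⟨M, hM⟩ : ∃ M, ‖u x₀‖ / Real.exp (k.re * x₀) = M := ⟨_, rfl⟩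
  have hle : ∀ s ∈ Icc 0 a, ‖u s‖ ≤ M * Real.exp (k.re * s) := fun s hs =>
    (div_le_iff₀ (Real.exp_pos _)).1 (hM ▸ hmax hs)
  have heq : ‖u x₀‖ = M * Real.exp (k.re * x₀) := (div_eq_iff (Real.exp_pos _).ne').1 hM
  have hre : |(k * x₀ : ℂ).re| = k.re * x₀ := by
    rw [Complex.re_mul_ofReal, abs_of_nonneg (mul_nonneg hk hx₀.1)]
  have hM_le : ‖k‖ * M ≤ ‖k‖ * ‖u 0‖ + ‖u' 0‖ + M * ∫ s in 0..a, ‖q s‖ := by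
    refine le_of_mul_le_mul_right ?_ (Real.exp_pos (k.re * x₀))
    calc ‖k‖ * M * Real.exp (k.re * x₀) = ‖k * u x₀‖ := by rw [norm_mul, heq, mul_assoc]
      _ ≤ ‖k * u 0‖ * ‖Complex.cosh (k * x₀)‖ + ‖u' 0‖ * ‖Complex.sinh (k * x₀)‖ +
            ‖∫ s in 0..x₀, Complex.sinh (k * (x₀ - s)) * (q s * u s)‖ := by
          rw [hu.variation_of_constants (Icc_subset_uIcc hx₀), ← norm_mul, ← norm_mul]
          exact norm_add₃_le
      _ ≤ ‖k * u 0‖ * Real.exp (k.re * x₀) + ‖u' 0‖ * Real.exp (k.re * x₀) +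
            M * (∫ s in 0..a, ‖q s‖) * Real.exp (k.re * x₀) := by
          gcongr
          · exact hre ▸ norm_cosh_le_exp_abs_re _
          · exact hre ▸ norm_sinh_le_exp_abs_re _
          · exact norm_integral_sinh_mul_le hq hk hle hx₀
      _ = _ := by rw [norm_mul]; ring
  have hM_nonneg : 0 ≤ M := hM ▸ by positivity
  have hM_bound : M ≤ 2 * (‖u 0‖ + ‖u' 0‖) := by
    refine le_of_mul_le_mul_left ?_ (zero_lt_one.trans_le hk1)
    nlinarith [norm_nonneg (u' 0)]
  exact (hle x hx).trans (by gcongr)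

lemma mul_exp_le_norm (hu : IsSchrodingerSolution (fun x => q x + k ^ 2) u u' 0 a)
    (hq : IntervalIntegrable q volume 0 a) (hk1 : 1 ≤ ‖k‖)
    (hkq : 2 * ∫ s in 0..a, ‖q s‖ ≤ ‖k‖)
    (hku : 8 * (‖u' 0‖ + 2 * (‖u 0‖ + ‖u' 0‖) * ∫ s in 0..a, ‖q s‖) ≤ ‖k‖ * ‖u 0‖)
    {x : ℝ} (hx : x ∈ Icc 0 a) (hkx : 1 / 2 ≤ k.re * x) :
    ‖u 0‖ / 8 * Real.exp (k.re * x) ≤ ‖u x‖ := by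
  have hk : 0 ≤ k.re := (pos_of_mul_pos_left (one_half_pos.trans_le hkx) hx.1).le
  have hre : (k * x : ℂ).re = k.re * x := Complex.re_mul_ofReal k x
  have hcosh : Real.exp (k.re * x) / 4 ≤ ‖Complex.cosh (k * x)‖ :=
    (exp_div_four_le_sinh hkx).trans (hre ▸ sinh_re_le_norm_cosh _)
  have hsinh : ‖Complex.sinh (k * x)‖ ≤ Real.exp (k.re * x) := by
    simpa only [hre, abs_of_nonneg (mul_nonneg hk hx.1)] using norm_sinh_le_exp_abs_re (k * x)
  have hint := norm_integral_sinh_mul_le hq hk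
    (fun s hs => hu.norm_le_mul_exp hq hk hk1 hkq hs) hx
  have hmain : ‖k‖ * ‖u 0‖ * ‖Complex.cosh (k * x)‖ ≤ ‖k‖ * ‖u x‖ +
      ‖u' 0‖ * ‖Complex.sinh (k * x)‖ +
      ‖∫ s in 0..x, Complex.sinh (k * (x - s)) * (q s * u s)‖ := by
    simp only [← norm_mul]
    rw [show k * u 0 * Complex.cosh (k * x) = k * u x - u' 0 * Complex.sinh (k * x) -
      ∫ s in 0..x, Complex.sinh (k * (x - s)) * (q s * u s) by
        rw [hu.variation_of_constants (Icc_subset_uIcc hx)]; ring]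
    exact (norm_sub_le _ _).trans (by gcongr; exact norm_sub_le _ _)
  have hcosh_mul : ‖k‖ * ‖u 0‖ * (Real.exp (k.re * x) / 4) ≤
      ‖k‖ * ‖u 0‖ * ‖Complex.cosh (k * x)‖ := by gcongr
  have hsinh_mul : ‖u' 0‖ * ‖Complex.sinh (k * x)‖ ≤ ‖u' 0‖ * Real.exp (k.re * x) := by gcongr
  have hku_mul := mul_le_mul_of_nonneg_right hku (Real.exp_pos (k.re * x)).le
  refine le_of_mul_le_mul_left ?_ (zero_lt_one.trans_le hk1)
  linarith

end IsSchrodingerSolution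

end Growth

section LowerBound

variable {a : ℝ} {k : ℂ} {q u u' : ℝ → ℂ}

lemma mul_integral_exp_two_mul (κ x y : ℝ) :
    κ * ∫ t in x..y, Real.exp (2 * κ * t) =
      (Real.exp (2 * κ * y) - Real.exp (2 * κ * x)) / 2 := by
  have hderiv (t : ℝ) : HasDerivAt (fun t => Real.exp (2 * κ * t) / 2)
      (κ * Real.exp (2 * κ * t)) t :=
    (((hasDerivAt_id t).const_mul (2 * κ)).exp.div_const 2).congr_deriv (by simp only [id]; ring)
  rw [← intervalIntegral.integral_const_mul, intervalIntegral.integral_eq_sub_of_hasDerivAt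
    (fun t _ => hderiv t) (Continuous.intervalIntegrable (by fun_prop) _ _)]
  ring

lemma im_sq (w : ℂ) : (w ^ 2).im = 2 * w.re * w.im := by
  rw [sq, Complex.mul_im]
  ring

lemma mul_norm_le_two_mul_abs_re {s : ℝ} (hks : s * ‖k‖ ^ 2 ≤ |(k ^ 2).im|) :
    s * ‖k‖ ≤ 2 * |k.re| := by
  rcases eq_or_ne k 0 with rfl | hk
  · simp
  refine le_of_mul_le_mul_right ?_ (norm_pos_iff.2 hk)
  calc s * ‖k‖ * ‖k‖ = s * ‖k‖ ^ 2 := by ring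
    _ ≤ |2 * k.re * k.im| := by rwa [im_sq] at hks
    _ = 2 * |k.re| * |k.im| := by rw [abs_mul, abs_mul, abs_two]
    _ ≤ 2 * |k.re| * ‖k‖ := by gcongr; exact Complex.abs_im_le_norm k

lemma mul_norm_le_two_mul_abs_im {s : ℝ} (hks : s * ‖k‖ ^ 2 ≤ |(k ^ 2).im|) :
    s * ‖k‖ ≤ 2 * |k.im| := by
  have hIk : s * ‖Complex.I * k‖ ^ 2 ≤ |((Complex.I * k) ^ 2).im| := by
    simpa [mul_pow] using hks
  simpa using mul_norm_le_two_mul_abs_re hIk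

namespace IsSchrodingerSolution

lemma mul_exp_le_re_mul_integral (hu : IsSchrodingerSolution (fun x => q x + k ^ 2) u u' 0 a)
    (hq : IntervalIntegrable q volume 0 a) (ha : 0 < a) (hk1 : 1 ≤ ‖k‖)
    (hkq : 2 * ∫ s in 0..a, ‖q s‖ ≤ ‖k‖)
    (hku : 8 * (‖u' 0‖ + 2 * (‖u 0‖ + ‖u' 0‖) * ∫ s in 0..a, ‖q s‖) ≤ ‖k‖ * ‖u 0‖)
    (hka : 1 ≤ k.re * a) :
    ‖u 0‖ ^ 2 / 256 * Real.exp (2 * k.re * a) ≤ k.re * ∫ x in 0..a, ‖u x‖ ^ 2 := by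
  have hk : 0 < k.re := pos_of_mul_pos_left (zero_lt_one.trans_le hka) ha.le
  have hcont : ContinuousOn (fun x => ‖u x‖ ^ 2) (uIcc 0 a) :=
    hu.isPrimitiveOn.continuousOn.norm.pow 2
  have hpointwise : ∀ x ∈ Icc (a / 2) a,
      ‖u 0‖ ^ 2 / 64 * Real.exp (2 * k.re * x) ≤ ‖u x‖ ^ 2 := by
    intro x hx
    have hkx : 1 / 2 ≤ k.re * x := by nlinarith [hx.1]
    have hnorm := hu.mul_exp_le_norm hq hk1 hkq hku ⟨(half_pos ha).le.trans hx.1, hx.2⟩ hkx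
    calc ‖u 0‖ ^ 2 / 64 * Real.exp (2 * k.re * x) = (‖u 0‖ / 8 * Real.exp (k.re * x)) ^ 2 := by
          rw [mul_pow, ← Real.exp_nat_mul]; push_cast; ring_nf
      _ ≤ ‖u x‖ ^ 2 := by gcongr
  have hintegral : ‖u 0‖ ^ 2 / 64 * ∫ x in a / 2..a, Real.exp (2 * k.re * x) ≤
      ∫ x in 0..a, ‖u x‖ ^ 2 := by
    rw [← intervalIntegral.integral_const_mul]
    refine (intervalIntegral.integral_mono_on (half_le_self ha.le)
      (Continuous.intervalIntegrable (by fun_prop) _ _)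
      (hcont.mono ?_).intervalIntegrable hpointwise).trans
      (intervalIntegral.integral_mono_interval (half_pos ha).le (half_le_self ha.le) le_rfl
        (.of_forall fun x => by positivity) hcont.intervalIntegrable)
    rw [uIcc_of_le (half_le_self ha.le), uIcc_of_le ha.le]
    exact Icc_subset_Icc_left (half_pos ha).le
  have hexp : 2 * Real.exp (2 * k.re * (a / 2)) ≤ Real.exp (2 * k.re * a) := by
    have htwo : 2 ≤ Real.exp (k.re * a) := by linarith [Real.add_one_le_exp (k.re * a)]
    calc 2 * Real.exp (2 * k.re * (a / 2)) = 2 * Real.exp (k.re * a) := by ring_nf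
      _ ≤ Real.exp (k.re * a) * Real.exp (k.re * a) := by gcongr
      _ = Real.exp (2 * k.re * a) := by rw [← Real.exp_add]; ring_nf
  calc ‖u 0‖ ^ 2 / 256 * Real.exp (2 * k.re * a)
      ≤ ‖u 0‖ ^ 2 / 64 *
          ((Real.exp (2 * k.re * a) - Real.exp (2 * k.re * (a / 2))) / 2) := by
        nlinarith [sq_nonneg ‖u 0‖]
    _ = k.re * (‖u 0‖ ^ 2 / 64 * ∫ x in a / 2..a, Real.exp (2 * k.re * x)) := by
        rw [← mul_integral_exp_two_mul]; ring
    _ ≤ k.re * ∫ x in 0..a, ‖u x‖ ^ 2 := by gcongr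

lemma exists_forall_mul_exp_le_abs_im_mul_integral (ha : 0 < a)
    (hq : IntervalIntegrable q volume 0 a) {c₀ : ℂ} (hc₀ : c₀ ≠ 0) (c₁ : ℂ) {s : ℝ} (hs : 0 < s) :
    ∃ K, 0 < K ∧ ∀ k : ℂ, K ≤ ‖k‖ → 0 ≤ k.re → s * ‖k‖ ^ 2 ≤ |(k ^ 2).im| →
      ∀ u u' : ℝ → ℂ, IsSchrodingerSolution (fun x => q x + k ^ 2) u u' 0 a →
        u 0 = c₀ → u' 0 = c₁ →
        s * ‖c₀‖ ^ 2 / 256 * Real.exp (2 * k.re * a) ≤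
          |(k ^ 2).im| * ∫ x in 0..a, ‖u x‖ ^ 2 := by
  obtain ⟨K, hK⟩ := Filter.eventually_atTop.1 <|
    ((((Filter.eventually_ge_atTop (1 : ℝ)).and
      (Filter.eventually_ge_atTop (2 * ∫ s in 0..a, ‖q s‖))).and
      (Filter.eventually_ge_atTop
        (8 * (‖c₁‖ + 2 * (‖c₀‖ + ‖c₁‖) * ∫ s in 0..a, ‖q s‖) / ‖c₀‖))).and
      (Filter.eventually_ge_atTop (2 / (s * a))))
  refine ⟨max K 1, by positivity, ?_⟩
  rintro k hk hre hks u u' hu rfl rfl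
  obtain ⟨⟨⟨hk1, hkq⟩, hku⟩, hka⟩ := hK ‖k‖ ((le_max_left K 1).trans hk)
  rw [div_le_iff₀ (norm_pos_iff.2 hc₀)] at hku
  rw [div_le_iff₀ (mul_pos hs ha)] at hka
  have hkre := abs_of_nonneg hre ▸ mul_norm_le_two_mul_abs_re hks
  have hkim : s ≤ 2 * |k.im| := by nlinarith [mul_norm_le_two_mul_abs_im hks]
  have hintegral := hu.mul_exp_le_re_mul_integral hq ha hk1 hkq hku (by nlinarith)
  calc s * ‖u 0‖ ^ 2 / 256 * Real.exp (2 * k.re * a)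
      = s * (‖u 0‖ ^ 2 / 256 * Real.exp (2 * k.re * a)) := by ring
    _ ≤ 2 * |k.im| * (k.re * ∫ x in 0..a, ‖u x‖ ^ 2) := by gcongr
    _ = |(k ^ 2).im| * ∫ x in 0..a, ‖u x‖ ^ 2 := by
        rw [im_sq, abs_mul, abs_of_nonneg (mul_nonneg zero_le_two hre)]
        ring

end IsSchrodingerSolution

end LowerBound

section WeylDisc

variable {f f' g : ℂ} {y N : ℝ}

lemma abs_mul_le_norm_mul_norm_sub (hf : (starRingEnd ℂ f * f').im = -(y * N))
    (hg : 0 ≤ y * g.im) : |y| * N ≤ ‖f‖ * ‖f' - f * g‖ := by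
  have him : (starRingEnd ℂ f * (f' - f * g)).im = -(y * N + Complex.normSq f * g.im) := by
    rw [mul_sub, Complex.sub_im, hf, ← mul_assoc, mul_comm _ f, Complex.mul_conj,
      Complex.im_ofReal_mul]
    ring
  have hnorm : |y * N + Complex.normSq f * g.im| ≤ ‖f‖ * ‖f' - f * g‖ := by
    simpa only [him, abs_neg, norm_mul, RCLike.norm_conj] using
      Complex.abs_im_le_norm (starRingEnd ℂ f * (f' - f * g))
  refine le_trans ?_ hnorm
  rcases lt_trichotomy y 0 with hy | rfl | hy
  · have hg_im : Complex.normSq f * g.im ≤ 0 :=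
      mul_nonpos_of_nonneg_of_nonpos (Complex.normSq_nonneg f) (by nlinarith)
    rw [abs_of_neg hy]
    linarith [neg_le_abs (y * N + Complex.normSq f * g.im)]
  · rw [abs_zero, zero_mul]
    exact abs_nonneg _
  · have hg_im : 0 ≤ Complex.normSq f * g.im :=
      mul_nonneg (Complex.normSq_nonneg f) (nonneg_of_mul_nonneg_right hg hy)
    rw [abs_of_pos hy]
    linarith [le_abs_self (y * N + Complex.normSq f * g.im)]

lemma sub_mul_ne_zero_of_im_conj_mul (hf : (starRingEnd ℂ f * f').im = -(y * N))
    (hyN : 0 < |y| * N) (hg : 0 ≤ y * g.im) : f' - f * g ≠ 0 := by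
  have hpos := hyN.trans_le (abs_mul_le_norm_mul_norm_sub hf hg)
  exact norm_pos_iff.1 (pos_of_mul_pos_right hpos (norm_nonneg f))

lemma norm_weyl_sub_weyl_le (hf : (starRingEnd ℂ f * f').im = -(y * N)) (hyN : 0 < |y| * N)
    {h h' g₁ g₂ : ℂ} (hg₁ : 0 ≤ y * g₁.im) (hg₂ : 0 ≤ y * g₂.im) :
    ‖(h' - h * g₁) / (f' - f * g₁) - (h' - h * g₂) / (f' - f * g₂)‖ ≤
      2 * ‖f * h' - f' * h‖ / (|y| * N) := by
  have hle₁ := abs_mul_le_norm_mul_norm_sub hf hg₁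
  have hle₂ := abs_mul_le_norm_mul_norm_sub hf hg₂
  have hne₁ := sub_mul_ne_zero_of_im_conj_mul hf hyN hg₁
  have hne₂ := sub_mul_ne_zero_of_im_conj_mul hf hyN hg₂
  have hf0 : f ≠ 0 := by
    rintro rfl
    simp only [norm_zero, zero_mul] at hle₁
    linarith
  have hdiff : (h' - h * g₁) / (f' - f * g₁) - (h' - h * g₂) / (f' - f * g₂) =
      (f * h' - f' * h) / (f * (f' - f * g₁)) - (f * h' - f' * h) / (f * (f' - f * g₂)) := by
    rw [div_sub_div _ _ hne₁ hne₂, div_sub_div _ _ (mul_ne_zero hf0 hne₁) (mul_ne_zero hf0 hne₂),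
      div_eq_div_iff (mul_ne_zero hne₁ hne₂)
        (mul_ne_zero (mul_ne_zero hf0 hne₁) (mul_ne_zero hf0 hne₂))]
    ring
  calc ‖(h' - h * g₁) / (f' - f * g₁) - (h' - h * g₂) / (f' - f * g₂)‖
      ≤ ‖f * h' - f' * h‖ / (‖f‖ * ‖f' - f * g₁‖) +
          ‖f * h' - f' * h‖ / (‖f‖ * ‖f' - f * g₂‖) := by
        rw [hdiff]
        simpa only [norm_div, norm_mul] using norm_sub_le
          ((f * h' - f' * h) / (f * (f' - f * g₁))) ((f * h' - f' * h) / (f * (f' - f * g₂)))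
    _ ≤ ‖f * h' - f' * h‖ / (|y| * N) + ‖f * h' - f' * h‖ / (|y| * N) := by gcongr
    _ = 2 * ‖f * h' - f' * h‖ / (|y| * N) := by ring

end WeylDisc

lemma IsNevanlinna.im_mul_im_nonneg {γ : ℂ → ℂ} (hγ : IsNevanlinna γ) {z : ℂ} (hz : z.im ≠ 0) :
    0 ≤ z.im * (γ z).im := by
  rcases lt_or_gt_of_ne hz with hneg | hpos
  · have hconj := hγ.2.2 (starRingEnd ℂ z) (by simpa using hneg)
    rw [hγ.2.1 z hz, Complex.conj_im] at hconj
    exact mul_nonneg_of_nonpos_of_nonpos hneg.le (neg_nonneg.1 hconj)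
  · exact mul_nonneg hpos.le (hγ.2.2 z hpos)

lemma cpow_one_half_sq (w : ℂ) : (w ^ (1 / 2 : ℂ)) ^ 2 = w := by
  simp

lemma re_cpow_one_half_nonneg (w : ℂ) : 0 ≤ (w ^ (1 / 2 : ℂ)).re := by
  rw [one_div, Complex.cpow_inv_two_re]
  positivity

lemma sin_ne_zero_of_mem_Ioo {θ : ℝ} (hθ : θ ∈ Ioo 0 Real.pi ∨ θ ∈ Ioo Real.pi (2 * Real.pi)) :
    Real.sin θ ≠ 0 := by
  rcases hθ with hθ | hθ
  · exact (Real.sin_pos_of_mem_Ioo hθ).ne'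
  · have hpos := Real.sin_pos_of_mem_Ioo (x := θ - Real.pi)
      ⟨by linarith [hθ.1], by linarith [hθ.2]⟩
    rw [Real.sin_sub_pi] at hpos
    exact (neg_pos.1 hpos).ne

lemma norm_ofReal_mul_exp_mul_I {r : ℝ} (hr : 0 ≤ r) (θ : ℝ) :
    ‖(r : ℂ) * Complex.exp (θ * Complex.I)‖ = r := by
  rw [norm_mul, Complex.norm_exp_ofReal_mul_I, mul_one, Complex.norm_of_nonneg hr]

lemma im_ofReal_mul_exp_mul_I (r θ : ℝ) :
    ((r : ℂ) * Complex.exp (θ * Complex.I)).im = r * Real.sin θ := by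
  rw [Complex.im_ofReal_mul, Complex.exp_ofReal_mul_I_im]

theorem weyl_difference_exponentially_small_general {a : ℝ} (ha : 0 < a) {q : ℝ → ℝ}
    (hq : IntegrableOn q (Icc 0 a)) {c₀ c₁ d₀ d₁ : ℝ} (hc₀ : c₀ ≠ 0) {φ ψ : ℂ → ℝ → ℂ}
    (hφ : IsRegSolution a q c₀ c₁ φ) (hψ : IsRegSolution a q d₀ d₁ ψ) {φ' ψ' : ℂ → ℂ}
    (hφ' : ∀ z, φ' z = c₁ + ∫ s in 0..a, ((q s : ℂ) - z) * φ z s)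
    (hψ' : ∀ z, ψ' z = d₁ + ∫ s in 0..a, ((q s : ℂ) - z) * ψ z s) {s : ℝ} (hs : 0 < s) :
    ∃ R : ℝ, 0 < R ∧ ∀ z : ℂ, R ≤ ‖z‖ → s * ‖z‖ ≤ |z.im| →
      (∀ g : ℂ, 0 ≤ z.im * g.im → φ' z - φ z a * g ≠ 0) ∧
      ∀ g₁ g₂ : ℂ, 0 ≤ z.im * g₁.im → 0 ≤ z.im * g₂.im →
        ‖(ψ' z - ψ z a * g₁) / (φ' z - φ z a * g₁) -
            (ψ' z - ψ z a * g₂) / (φ' z - φ z a * g₂)‖ ≤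
          512 * |c₀ * d₁ - c₁ * d₀| / (s * c₀ ^ 2) *
            Real.exp (-(2 * a) * ((-z) ^ (1 / 2 : ℂ)).re) := by
  have hqi : IntervalIntegrable (fun x => (q x : ℂ)) volume 0 a :=
    (intervalIntegrable_iff_integrableOn_Icc_of_le ha.le).2 (Integrable.ofReal hq)
  obtain ⟨K, hK, hlower⟩ :=
    IsSchrodingerSolution.exists_forall_mul_exp_le_abs_im_mul_integral ha hqi
      (Complex.ofReal_ne_zero.2 hc₀) c₁ hs
  refine ⟨K ^ 2, by positivity, fun z hKz hsz => ?_⟩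
  have hk_sq := cpow_one_half_sq (-z)
  have hk_re := re_cpow_one_half_nonneg (-z)
  set k := (-z) ^ (1 / 2 : ℂ)
  have hz : z = -k ^ 2 := by rw [hk_sq, neg_neg]
  have hu := hφ.isSchrodingerSolution ha.le hq z
  have hv := hψ.isSchrodingerSolution ha.le hq z
  have hφ0 : φ z 0 = c₀ := by simpa using hφ.2 z 0 ⟨le_rfl, ha.le⟩
  have hψ0 : ψ z 0 = d₀ := by simpa using hψ.2 z 0 ⟨le_rfl, ha.le⟩
  have hN : s * c₀ ^ 2 / 256 * Real.exp (2 * k.re * a) ≤ |z.im| * ∫ x in 0..a, ‖φ z x‖ ^ 2 := by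
    simpa [hz] using hlower k (le_of_sq_le_sq (by simpa [hz] using hKz) (norm_nonneg k)) hk_re
      (by simpa [hz] using hsz) (φ z) _ (by simpa [hz] using hu) hφ0 (by simp)
  have hN_pos : 0 < |z.im| * ∫ x in 0..a, ‖φ z x‖ ^ 2 := lt_of_lt_of_le (by positivity) hN
  have henergy : (starRingEnd ℂ (φ z a) * φ' z).im = -(z.im * ∫ x in 0..a, ‖φ z x‖ ^ 2) := by
    simpa [hφ0, ← hφ'] using hu.im_conj_mul_deriv
  have hW : φ z a * ψ' z - φ' z * ψ z a = ((c₀ * d₁ - c₁ * d₀ : ℝ) : ℂ) := by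
    simpa [hφ0, hψ0, ← hφ', ← hψ'] using hu.wronskian_eq hv
  refine ⟨fun g hg => sub_mul_ne_zero_of_im_conj_mul henergy hN_pos hg, fun g₁ g₂ hg₁ hg₂ =>
    (norm_weyl_sub_weyl_le henergy hN_pos hg₁ hg₂).trans ?_⟩
  rw [hW, Complex.norm_real, Real.norm_eq_abs]
  calc 2 * |c₀ * d₁ - c₁ * d₀| / (|z.im| * ∫ x in 0..a, ‖φ z x‖ ^ 2)
      ≤ 2 * |c₀ * d₁ - c₁ * d₀| / (s * c₀ ^ 2 / 256 * Real.exp (2 * k.re * a)) := by gcongr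
    _ = 512 * |c₀ * d₁ - c₁ * d₀| / (s * c₀ ^ 2) * Real.exp (-(2 * a) * k.re) := by
        rw [show -(2 * a) * k.re = -(2 * k.re * a) by ring, Real.exp_neg]
        field_simp
        ring

/-- **Exponential smallness of the difference of Weyl–Titchmarsh functions** (relation (3.9)).
For two Nevanlinna boundary parameters `γ, γ̂` of the same regular Sturm–Liouville problem
on `[0,a]`, the corresponding Weyl–Titchmarsh functions differ along every non-real ray by
`O(exp(-2a(1-ε) Re √(-z)))`, for every `ε > 0`. -/
theorem weyl_difference_exponentially_small
    (a : ℝ) (ha : 0 < a)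
    (q : ℝ → ℝ) (hq : IntegrableOn q (Icc 0 a))
    (α : ℝ) (hα : α ∈ Ioo 0 Real.pi)
    (φ ψ : ℂ → ℝ → ℂ)
    (hφ : IsRegSolution a q (Real.sin α) (Real.cos α) φ)
    (hψ : IsRegSolution a q (-Real.cos α) (Real.sin α) ψ)
    (φ' : ℂ → ℂ) (hφ' : ∀ z : ℂ,
      φ' z = (Real.cos α : ℂ) + ∫ s in (0:ℝ)..a, ((q s : ℂ) - z) * φ z s)
    (ψ' : ℂ → ℂ) (hψ' : ∀ z : ℂ,
      ψ' z = (Real.sin α : ℂ) + ∫ s in (0:ℝ)..a, ((q s : ℂ) - z) * ψ z s)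
    (γ γhat : ℂ → ℂ) (hγ : IsNevanlinna γ) (hγhat : IsNevanlinna γhat)
    (m mhat : ℂ → ℂ)
    (hm : ∀ z : ℂ, z.im ≠ 0 → m z = (ψ' z - ψ z a * γ z) / (φ' z - φ z a * γ z))
    (hmhat : ∀ z : ℂ, z.im ≠ 0 →
      mhat z = (ψ' z - ψ z a * γhat z) / (φ' z - φ z a * γhat z))
    (θ : ℝ) (hθ : θ ∈ Ioo 0 Real.pi ∨ θ ∈ Ioo Real.pi (2 * Real.pi))
    (ε : ℝ) (hε : 0 < ε) :
    ∃ C : ℝ, 0 < C ∧ ∃ R : ℝ, 0 < R ∧ ∀ r : ℝ, R ≤ r →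
      (φ' ((r : ℂ) * Complex.exp (θ * Complex.I)) -
          φ ((r : ℂ) * Complex.exp (θ * Complex.I)) a *
            γ ((r : ℂ) * Complex.exp (θ * Complex.I)) ≠ 0) ∧
      (φ' ((r : ℂ) * Complex.exp (θ * Complex.I)) -
          φ ((r : ℂ) * Complex.exp (θ * Complex.I)) a *
            γhat ((r : ℂ) * Complex.exp (θ * Complex.I)) ≠ 0) ∧
      ‖m ((r : ℂ) * Complex.exp (θ * Complex.I)) -
          mhat ((r : ℂ) * Complex.exp (θ * Complex.I))‖ ≤
        C * Real.exp (-(2 * a * (1 - ε)) *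
          ((-((r : ℂ) * Complex.exp (θ * Complex.I))) ^ (1/2 : ℂ)).re) := by
  have hs : 0 < |Real.sin θ| := abs_pos.2 (sin_ne_zero_of_mem_Ioo hθ)
  have hα_pos : 0 < Real.sin α := Real.sin_pos_of_mem_Ioo hα
  obtain ⟨R, hR, hbound⟩ :=
    weyl_difference_exponentially_small_general ha hq hα_pos.ne' hφ hψ hφ' hψ' hs
  refine ⟨512 * |Real.sin α * Real.sin α - Real.cos α * -Real.cos α| /
    (|Real.sin θ| * Real.sin α ^ 2), ?_, R, hR, fun r hr => ?_⟩
  · rw [mul_neg, sub_neg_eq_add, ← sq, ← sq, Real.sin_sq_add_cos_sq, abs_one]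
    positivity
  have hr0 : 0 < r := hR.trans_le hr
  have hnorm := norm_ofReal_mul_exp_mul_I hr0.le θ
  have him := im_ofReal_mul_exp_mul_I r θ
  set z := (r : ℂ) * Complex.exp (θ * Complex.I)
  have hz : z.im ≠ 0 := him ▸ mul_ne_zero hr0.ne' (abs_pos.1 hs)
  obtain ⟨hne, hle⟩ := hbound z (hnorm.symm ▸ hr)
    (by rw [hnorm, him, abs_mul, abs_of_pos hr0, mul_comm])
  have hγz := hγ.im_mul_im_nonneg hz
  have hγhatz := hγhat.im_mul_im_nonneg hz
  refine ⟨hne _ hγz, hne _ hγhatz, ?_⟩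
  rw [hm z hz, hmhat z hz]
  refine (hle _ _ hγz hγhatz).trans ?_
  gcongr ?_ * Real.exp ?_
  linarith [mul_nonneg (mul_pos ha hε).le (re_cpow_one_half_nonneg (-z))]
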